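/- Let Ḡ be graded antisymmetric with the Lie algebra relations, and suppose K₁₂(Ḡ₁ + Ḡ₂) = 0 = (Ḡ₁ + Ḡ₂)K₁₂. Then K₁₂(Ḡ₁² + βḠ₁) = K₁₂(Ḡ₂² + βḠ₂) and (Ḡ₁² + βḠ₁)K₁₂ = (Ḡ₂² + βḠ₂)K₁₂, where β = n/2 − ϵ. -/

import Mathlib

open Matrix BigOperators

noncomputable section

/-- The flip (permutation) operator `P` on the tensor square. -/
def Pm (A : Type*) [Ring A] (n : ℕ) : Matrix (Fin n × Fin n) (Fin n × Fin n) A :=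
  fun p q => if p.1 = q.2 ∧ p.2 = q.1 then 1 else 0

/-- The rank-one invariant operator `K^{a₁a₂}_{b₁b₂} = ε^{a₁a₂} ε_{b₁b₂}`. -/
def Km (A : Type*) [Ring A] [Algebra ℂ A] {n : ℕ}
    (ε εInv : Matrix (Fin n) (Fin n) ℂ) :
    Matrix (Fin n × Fin n) (Fin n × Fin n) A :=
  fun p q => algebraMap ℂ A (εInv p.1 p.2 * ε q.1 q.2)

/-- `M₁ = M ⊗ I`, acting on the first tensor factor. -/
def T1 {n : ℕ} {A : Type*} [Ring A] (M : Matrix (Fin n) (Fin n) A) :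
    Matrix (Fin n × Fin n) (Fin n × Fin n) A :=
  fun p q => if p.2 = q.2 then M p.1 q.1 else 0

/-- `M₂ = I ⊗ M`, acting on the second tensor factor. -/
def T2 {n : ℕ} {A : Type*} [Ring A] (M : Matrix (Fin n) (Fin n) A) :
    Matrix (Fin n × Fin n) (Fin n × Fin n) A :=
  fun p q => if p.1 = q.1 then M p.2 q.2 else 0

/-- Index lowering with the form ε: `M_{ab} = ε_{ac} M^c_b`. -/
def lowIx {n : ℕ} {A : Type*} [Ring A] [Algebra ℂ A]
    (ε : Matrix (Fin n) (Fin n) ℂ) (M : Matrix (Fin n) (Fin n) A) :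
    Matrix (Fin n) (Fin n) A :=
  fun a b => ∑ c, ε a c • M c b

/-- The fundamental R matrix `R(u) = u(u+β) I + (u+β) P − ϵ u K`. -/
def Rm (A : Type*) [Ring A] [Algebra ℂ A] {n : ℕ}
    (ε εInv : Matrix (Fin n) (Fin n) ℂ) (ϵ β u : ℂ) :
    Matrix (Fin n × Fin n) (Fin n × Fin n) A :=
  (u * (u + β)) • (1 : Matrix (Fin n × Fin n) (Fin n × Fin n) A)
    + (u + β) • Pm A n + (-(ϵ * u)) • Km A ε εInv

/-- The so(n)/sp(n) Lie algebra relations for a lowered-index matrix of generators. -/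
def LieRel {n : ℕ} {A : Type*} [Ring A] [Algebra ℂ A]
    (ε : Matrix (Fin n) (Fin n) ℂ) (Gl : Matrix (Fin n) (Fin n) A) : Prop :=
  ∀ a b c d, Gl a b * Gl c d - Gl c d * Gl a b =
    -(ε c b • Gl a d) + ε a d • Gl c b + ε a c • Gl b d - ε d b • Gl c a

/-- Graded antisymmetry: `M_{ab} = −ϵ M_{ba}`. -/
def GAnti {n : ℕ} {A : Type*} [Ring A] [Algebra ℂ A]
    (ϵ : ℂ) (Gl : Matrix (Fin n) (Fin n) A) : Prop :=
  ∀ a b, Gl a b = -(ϵ • Gl b a)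

/-- Graded antisymmetrization over all four indices of the product
`Gl_{[a b} Gl_{c d)}`: antisymmetrization for ϵ = 1, symmetrization for ϵ = −1. -/
def gradedW {n : ℕ} {A : Type*} [Ring A] [Algebra ℂ A]
    (ϵ : ℂ) (Gl : Matrix (Fin n) (Fin n) A) (a b c d : Fin n) : A :=
  ∑ σ : Equiv.Perm (Fin 4),
    (if Equiv.Perm.sign σ = 1 then (1 : ℂ) else -ϵ) •
      (Gl (![a,b,c,d] (σ 0)) (![a,b,c,d] (σ 1)) *
       Gl (![a,b,c,d] (σ 2)) (![a,b,c,d] (σ 3)))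

/-!
Write `X = G₁`, `Y = G₂`. Since `K X = -K Y`, the difference `K (X² - Y²)` is `K [X, Y]`, and the
Lie algebra relations rewrite `[X, Y]` as `[Y, P - ϵ K]`. Moving `P` and `K` to the left with
`K P = ϵ K`, `Y P = P X` and `K² = ϵ n K` leaves `(n - 2ϵ) K Y`, because `K Y K` vanishes: inserting
a `P` in it changes its sign. As `n - 2ϵ = 2β` and `2 K Y = K (Y - X)`, this is the first identity.
All the relations are stable under passing to the opposite algebra, which gives the second one.
-/

section Abstract

variable {k R : Type*} [CommRing k] [Ring R] [Algebra k R]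

/-- The relations of Brauer type between a contraction `K` and a flip `P`: the flip acts on the
contraction by the scalar `ϵ`, and a closed loop evaluates to `ϵ * ω`. For the operators on the
tensor square of an `n`-dimensional space, `ω = n`. The relation `P * P = 1` is not included. -/
structure IsContractionFlip (ϵ ω : k) (K P : R) : Prop where
  mul_flip : K * P = ϵ • K
  flip_mul : P * K = ϵ • K
  mul_self : K * K = (ϵ * ω) • K

variable {ϵ ω β : k} {K P X Y : R}

namespace IsContractionFlip

theorem op (h : IsContractionFlip ϵ ω K P) :
    IsContractionFlip ϵ ω (MulOpposite.op K) (MulOpposite.op P) where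
  mul_flip := congrArg MulOpposite.op h.flip_mul
  flip_mul := congrArg MulOpposite.op h.mul_flip
  mul_self := congrArg MulOpposite.op h.mul_self

theorem mul_mul_flip (h : IsContractionFlip ϵ ω K P) (hP : SemiconjBy P X Y)
    (hK : K * X = -(K * Y)) : K * Y * P = -(ϵ • (K * Y)) :=
  calc K * Y * P = K * P * X := by rw [mul_assoc, ← hP.eq, mul_assoc]
    _ = -(ϵ • (K * Y)) := by rw [h.mul_flip, smul_mul_assoc, hK, smul_neg]

theorem mul_mul_self_eq_zero (h : IsContractionFlip ϵ ω K P) (h2 : IsUnit (2 : k))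
    (hϵ : IsUnit ϵ) (hP : SemiconjBy P X Y) (hK : K * X = -(K * Y)) : K * Y * K = 0 := by
  have sign_change : ϵ • (K * Y * K) = -(ϵ • (K * Y * K)) :=
    calc ϵ • (K * Y * K) = K * Y * P * K := by rw [mul_assoc _ P, h.flip_mul, mul_smul_comm]
      _ = -(ϵ • (K * Y * K)) := by rw [h.mul_mul_flip hP hK, neg_mul, smul_mul_assoc]
  have two_smul_eq_zero : (2 : k) • ϵ • (K * Y * K) = 0 := by
    rw [two_smul]
    exact add_eq_zero_iff_eq_neg.mpr sign_change
  exact hϵ.smul_eq_zero.mp (h2.smul_eq_zero.mp two_smul_eq_zero)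

theorem mul_lie (h : IsContractionFlip ϵ ω K P) (h2 : IsUnit (2 : k)) (hϵ : ϵ * ϵ = 1)
    (hP : SemiconjBy P X Y) (hXY : Commute (X + P - ϵ • K) Y) (hK : K * X = -(K * Y)) :
    K * ⁅X, Y⁆ = (ω - 2 * ϵ) • (K * Y) := by
  have lie_eq : ⁅X, Y⁆ = ⁅Y, P - ϵ • K⁆ := by
    have lie_eq_zero : (X + P - ϵ • K) * Y - Y * (X + P - ϵ • K) = 0 := sub_eq_zero.mpr hXY.eq
    rw [← sub_eq_zero, ← lie_eq_zero, Ring.lie_def, Ring.lie_def]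
    noncomm_ring
  have hKYK : K * Y * K = 0 := h.mul_mul_self_eq_zero h2 (.of_mul_eq_one _ hϵ) hP hK
  calc K * ⁅X, Y⁆
      = K * Y * P - ϵ • (K * Y * K) - (K * P * Y - ϵ • (K * K * Y)) := by
        simp only [lie_eq, Ring.lie_def, mul_sub, sub_mul, mul_smul_comm, smul_mul_assoc, mul_assoc]
    _ = -(ϵ • (K * Y)) - (ϵ • (K * Y) - (ϵ * ϵ * ω) • (K * Y)) := by
        rw [h.mul_mul_flip hP hK, hKYK, h.mul_flip, h.mul_self, smul_mul_assoc, smul_mul_assoc]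
        module
    _ = (ω - 2 * ϵ) • (K * Y) := by
        rw [hϵ]
        module

theorem mul_quadratic_eq (h : IsContractionFlip ϵ ω K P) (h2 : IsUnit (2 : k)) (hϵ : ϵ * ϵ = 1)
    (hβ : 2 * β = ω - 2 * ϵ) (hP : SemiconjBy P X Y) (hXY : Commute (X + P - ϵ • K) Y)
    (hK : K * (X + Y) = 0) : K * (X * X + β • X) = K * (Y * Y + β • Y) := by
  have hKX : K * X = -(K * Y) := eq_neg_of_add_eq_zero_left (by rw [← mul_add, hK])
  have sq_sub_sq : K * (X * X) - K * (Y * Y) = K * ⁅X, Y⁆ := by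
    have hKXX : K * (X * X) = -(K * (Y * X)) := by rw [← mul_assoc, hKX, neg_mul, mul_assoc]
    have hKXY : K * (X * Y) = -(K * (Y * Y)) := by rw [← mul_assoc, hKX, neg_mul, mul_assoc]
    rw [Ring.lie_def, mul_sub, hKXX, hKXY]
    abel
  rw [h.mul_lie h2 hϵ hP hXY hKX, ← hβ, sub_eq_iff_eq_add] at sq_sub_sq
  rw [mul_add, mul_add, sq_sub_sq, mul_smul_comm, mul_smul_comm, hKX]
  module

theorem quadratic_mul_eq (h : IsContractionFlip ϵ ω K P) (h2 : IsUnit (2 : k)) (hϵ : ϵ * ϵ = 1)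
    (hβ : 2 * β = ω - 2 * ϵ) (hP : SemiconjBy P Y X) (hXY : Commute (X + P - ϵ • K) Y)
    (hK : (X + Y) * K = 0) : (X * X + β • X) * K = (Y * Y + β • Y) * K :=
  MulOpposite.op_injective <|
    h.op.mul_quadratic_eq h2 hϵ hβ hP.op hXY.op (congrArg MulOpposite.op hK)

end IsContractionFlip

end Abstract

section BilinearForm

variable {ι S : Type*} [Fintype ι] [DecidableEq ι] [CommRing S] {c : S} {M N : Matrix ι ι S}

theorem transpose_eq_smul_of_mul_eq_one (hM : Mᵀ = c • M) (hMN : M * N = 1) : Nᵀ = c • N := by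
  have left_inv : (c • Nᵀ) * M = 1 := by
    rw [smul_mul_assoc, ← mul_smul_comm, ← hM, ← transpose_mul, hMN, transpose_one]
  have hN : N = c • Nᵀ := (left_inv_eq_right_inv left_inv hMN).symm
  simpa only [transpose_smul, transpose_transpose] using congrArg transpose hN

theorem trace_mul_transpose_of_mul_eq_one (hM : Mᵀ = c • M) (hMN : M * N = 1) :
    trace (M * Nᵀ) = c * Fintype.card ι := by
  rw [transpose_eq_smul_of_mul_eq_one hM hMN, mul_smul_comm, hMN, trace_smul, trace_one,
    smul_eq_mul]

end BilinearForm

section TensorSquare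

variable {n : ℕ} {A : Type*} [Ring A]

theorem Pm_eq_toMatrix : Pm A n = (Equiv.prodComm (Fin n) (Fin n)).toPEquiv.toMatrix := by
  ext ⟨a, b⟩ ⟨c, d⟩
  simp [Pm, PEquiv.toMatrix_apply, and_comm]

theorem Pm_mul (M : Matrix (Fin n × Fin n) (Fin n × Fin n) A) :
    Pm A n * M = M.submatrix Prod.swap id := by
  rw [Pm_eq_toMatrix, PEquiv.toMatrix_toPEquiv_mul]
  rfl

theorem mul_Pm (M : Matrix (Fin n × Fin n) (Fin n × Fin n) A) :
    M * Pm A n = M.submatrix id Prod.swap := by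
  rw [Pm_eq_toMatrix, PEquiv.mul_toMatrix_toPEquiv]
  rfl

theorem semiconjBy_Pm_T1_T2 (M : Matrix (Fin n) (Fin n) A) :
    SemiconjBy (Pm A n) (T1 M) (T2 M) := by
  rw [SemiconjBy, Pm_mul, mul_Pm]
  rfl

theorem semiconjBy_Pm_T2_T1 (M : Matrix (Fin n) (Fin n) A) :
    SemiconjBy (Pm A n) (T2 M) (T1 M) := by
  rw [SemiconjBy, Pm_mul, mul_Pm]
  rfl

variable [Algebra ℂ A] {ϵ : ℂ} {ε εInv : Matrix (Fin n) (Fin n) ℂ}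

theorem Km_mul_Pm (hε : εᵀ = ϵ • ε) : Km A ε εInv * Pm A n = ϵ • Km A ε εInv := by
  rw [mul_Pm]
  ext ⟨a, b⟩ ⟨c, d⟩
  have hdc : ε d c = ϵ * ε c d := congrFun₂ hε c d
  simp only [Km, submatrix_apply, Matrix.smul_apply, id, Prod.swap, hdc, Algebra.smul_def,
    ← map_mul]
  rw [mul_left_comm]

theorem Pm_mul_Km (hεInv : εInvᵀ = ϵ • εInv) : Pm A n * Km A ε εInv = ϵ • Km A ε εInv := by
  rw [Pm_mul]
  ext ⟨a, b⟩ ⟨c, d⟩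
  have hba : εInv b a = ϵ * εInv a b := congrFun₂ hεInv a b
  simp only [Km, submatrix_apply, Matrix.smul_apply, id, Prod.swap, hba, Algebra.smul_def,
    ← map_mul]
  rw [mul_assoc]

theorem Km_mul_Km (ε εInv : Matrix (Fin n) (Fin n) ℂ) :
    Km A ε εInv * Km A ε εInv = trace (ε * εInvᵀ) • Km A ε εInv := by
  ext p q
  have contract : ∑ r : Fin n × Fin n, εInv p.1 p.2 * ε r.1 r.2 * (εInv r.1 r.2 * ε q.1 q.2) =
      trace (ε * εInvᵀ) * (εInv p.1 p.2 * ε q.1 q.2) := by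
    simp only [trace, diag_apply, mul_apply, transpose_apply, ← Fintype.sum_prod_type',
      Finset.sum_mul]
    exact Finset.sum_congr rfl fun r _ => by ring
  simp only [mul_apply, Km, Matrix.smul_apply, Algebra.smul_def, ← map_mul, ← map_sum, contract]

theorem isContractionFlip_Km_Pm (hε : εᵀ = ϵ • ε) (hinv : ε * εInv = 1) :
    IsContractionFlip ϵ (n : ℂ) (Km A ε εInv) (Pm A n) where
  mul_flip := Km_mul_Pm hε
  flip_mul := Pm_mul_Km (transpose_eq_smul_of_mul_eq_one hε hinv)
  mul_self := by rw [Km_mul_Km, trace_mul_transpose_of_mul_eq_one hε hinv, Fintype.card_fin]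

end TensorSquare

theorem stmt13 (n : ℕ) (ϵ β : ℂ) (hϵ : ϵ = 1 ∨ ϵ = -1)
    (hβ : β = (n : ℂ) / 2 - ϵ)
    (ε εInv : Matrix (Fin n) (Fin n) ℂ)
    (hsym : ∀ a b, ε a b = ϵ * ε b a)
    (hinv : ε * εInv = 1) (hinv' : εInv * ε = 1)
    (A : Type*) [Ring A] [Algebra ℂ A]
    (G : Matrix (Fin n) (Fin n) A)
    (hanti : GAnti ϵ (lowIx ε G))
    (hLieT : (T1 G + Pm A n - ϵ • Km A ε εInv) * T2 G =
             T2 G * (T1 G + Pm A n - ϵ • Km A ε εInv))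
    (hKL : Km A ε εInv * (T1 G + T2 G) = 0)
    (hKR : (T1 G + T2 G) * Km A ε εInv = 0) :
    Km A ε εInv * (T1 G * T1 G + β • T1 G) =
      Km A ε εInv * (T2 G * T2 G + β • T2 G) ∧
    (T1 G * T1 G + β • T1 G) * Km A ε εInv =
      (T2 G * T2 G + β • T2 G) * Km A ε εInv := by
  have hε : εᵀ = ϵ • ε := Matrix.ext fun a b => hsym b a
  have hKP : IsContractionFlip ϵ (n : ℂ) (Km A ε εInv) (Pm A n) := isContractionFlip_Km_Pm hε hinv
  have h2 : IsUnit (2 : ℂ) := .mk0 2 two_ne_zero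
  have hϵϵ : ϵ * ϵ = 1 := mul_self_eq_one_iff.mpr hϵ
  have h2β : 2 * β = n - 2 * ϵ := by rw [hβ]; ring
  exact ⟨hKP.mul_quadratic_eq h2 hϵϵ h2β (semiconjBy_Pm_T1_T2 G) hLieT hKL,
    hKP.quadratic_mul_eq h2 hϵϵ h2β (semiconjBy_Pm_T2_T1 G) hLieT hKR⟩
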